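/- arXiv:1001.4282 — 7 statements merged into one kernel-verified Lean document; each statement's English description precedes it below -/
import Mathlib

section
/- Let A be an abelian group (written multiplicatively), let 1 ≤ k ≤ d, and let B be the abelian group of all functions h from the powerset of [d] to A under pointwise multiplication. Let B_{d,k} be the subgroup of those h satisfying ∏_{S∈Λ} h(S) = 1 for every face Λ of [d] of dimension d−k+1. Then B_{d,k} is generated by the elements g(Λ,a), where Λ ranges over the k-dimensional faces of [d], a ranges over A, and g(Λ,a)(S) = a^{(−1)^{|S|}} for S ∈ Λ and g(Λ,a)(S) = 1 for S ∉ Λ. -/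
/-!
Twisting `h` to `f S = h S ^ (-1) ^ |S|` turns the generators into indicator functions of
`k`-dimensional faces, and turns the defining relations into the vanishing of all alternating sums
over `(d - k + 1)`-dimensional faces: `f` is a polynomial of degree at most `d - k` on the cube.

The generators satisfy the relations (`faceGen_mem_Bdk`): a `k`-face and a `(d - k + 1)`-face have
a free coordinate in common, and flipping it pairs off the factors of the product.

Conversely, Möbius inversion (`prod_powerset_inversion`) writes `f` as the product over all `T` of
indicators of the up-sets `{S | T ⊆ S}`, with values `c_T = (∏_{R ⊆ T} h R) ^ (-1) ^ |T|`.
Since a face of dimension `m + 1` is the disjoint union of two parallel faces of dimension `m`, the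
relations propagate to higher dimensions (`prod_face_eq_one`), so `c_T = 1` once `|T| > d - k`.
When `|T| ≤ d - k`, the up-set of `T` is a face of dimension `d - |T| ≥ k`, whose indicator is
generated by those of its `k`-dimensional subfaces (`faceGen_mem_closure`).
-/

open Finset

namespace Stmt3

/-- `Λ` is a face of dimension `n` in the powerset of `[d]`: a collection of subsets of the
form `{S ∪ K : S ⊆ F}` for disjoint `F`, `K` with `|F| = n`. -/
def IsFace {d : ℕ} (Λ : Finset (Finset (Fin d))) (n : ℕ) : Prop :=
  ∃ F K : Finset (Fin d), Disjoint F K ∧ F.card = n ∧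
    Λ = F.powerset.image (fun S => S ∪ K)

/-- The subgroup `B_{d,k}` of functions `h` from the powerset of `[d]` to `A` satisfying
`∏_{S ∈ Λ} h(S) = 1` for every face `Λ` of dimension `d − k + 1`. -/
def Bdk (A : Type*) [CommGroup A] (d k : ℕ) : Subgroup (Finset (Fin d) → A) where
  carrier := {h | ∀ Λ : Finset (Finset (Fin d)), IsFace Λ (d - k + 1) → ∏ S ∈ Λ, h S = 1}
  one_mem' := by intro Λ _; simp
  mul_mem' := by
    intro a b ha hb Λ hΛ
    simp only [Pi.mul_apply, Finset.prod_mul_distrib, ha Λ hΛ, hb Λ hΛ, one_mul]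
  inv_mem' := by
    intro a ha Λ hΛ
    simp only [Pi.inv_apply, Finset.prod_inv_distrib, ha Λ hΛ, inv_one]

/-- The generator `g(Λ, a)`: `g(Λ,a)(S) = a^{(−1)^{|S|}}` for `S ∈ Λ` and `1` otherwise. -/
def faceGen {A : Type*} [CommGroup A] {d : ℕ} (Λ : Finset (Finset (Fin d))) (a : A) :
    Finset (Fin d) → A :=
  fun S => if S ∈ Λ then a ^ ((-1 : ℤ) ^ S.card) else 1

/-- The face `Λ(F, K)`; it is the intended object only for disjoint `F` and `K`. -/
def face {d : ℕ} (F K : Finset (Fin d)) : Finset (Finset (Fin d)) :=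
  F.powerset.image (fun S => S ∪ K)

lemma mem_face {d : ℕ} {F K : Finset (Fin d)} (h : Disjoint F K) (S : Finset (Fin d)) :
    S ∈ face F K ↔ S \ F = K := by
  simp only [face, mem_image, mem_powerset]
  constructor
  · rintro ⟨R, hR, rfl⟩
    rw [union_sdiff_distrib, sdiff_eq_empty_iff_subset.2 hR, empty_union,
      sdiff_eq_self_of_disjoint h.symm]
  · rintro rfl
    exact ⟨S ∩ F, inter_subset_right, by ext x; simp; tauto⟩

lemma prod_face {A : Type*} [CommGroup A] {d : ℕ} {F K : Finset (Fin d)} (hFK : Disjoint F K)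
    (h : Finset (Fin d) → A) : ∏ S ∈ face F K, h S = ∏ S ∈ F.powerset, h (S ∪ K) := by
  refine prod_image fun S hS T hT hST => ?_
  have key : ∀ R : Finset (Fin d), R ⊆ F → (R ∪ K) \ K = R := fun R hR => by
    rw [union_sdiff_right, sdiff_eq_self_of_disjoint (hFK.mono_left hR)]
  rw [← key S (by simpa using hS), ← key T (by simpa using hT)]
  exact congrArg (· \ K) hST

lemma faceGen_insert {A : Type*} [CommGroup A] {d : ℕ} {F K : Finset (Fin d)} {i : Fin d}
    (hi : i ∉ F) (hFK : Disjoint (insert i F) K) (a : A) :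
    faceGen (face (insert i F) K) a =
      faceGen (face F K) a * faceGen (face F (insert i K)) a := by
  rw [disjoint_insert_left] at hFK
  have h2 : Disjoint F (insert i K) := disjoint_insert_right.2 ⟨hi, hFK.2⟩
  funext S
  simp only [faceGen, Pi.mul_apply, mem_face hFK.2, mem_face h2,
    mem_face (disjoint_insert_left.2 hFK)]
  have e : S \ insert i F = (S \ F).erase i := by ext x; simp; tauto
  rw [e]
  by_cases hS : i ∈ S \ F
  · have h1 : S \ F ≠ K := fun h => hFK.1 (h ▸ hS)
    have h3 : (S \ F).erase i = K ↔ S \ F = insert i K := erase_eq_iff_eq_insert hS hFK.1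
    simp [h1, h3]
  · have h1 : S \ F ≠ insert i K := fun h => hS (h ▸ mem_insert_self i K)
    simp [h1, erase_eq_of_notMem hS]

/-- Relations on all faces of dimension `n` imply those on all faces of dimension `n + m`. -/
lemma prod_face_eq_one {A : Type*} [CommGroup A] {d n : ℕ} {h : Finset (Fin d) → A}
    (hh : ∀ Λ : Finset (Finset (Fin d)), IsFace Λ n → ∏ S ∈ Λ, h S = 1) (m : ℕ) :
    ∀ F K : Finset (Fin d), Disjoint F K → F.card = n + m →
      ∏ S ∈ F.powerset, h (S ∪ K) = 1 := by
  induction m with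
  | zero =>
    intro F K hFK hF
    rw [← prod_face hFK]
    exact hh _ ⟨F, K, hFK, hF, rfl⟩
  | succ m ih =>
    intro F K hFK hF
    obtain ⟨i, G, hi, rfl, hG⟩ := card_eq_succ.1 (show F.card = (n + m) + 1 by omega)
    rw [disjoint_insert_left] at hFK
    rw [prod_powerset_insert hi, ih G K hFK.2 hG, one_mul,
      ← ih G (insert i K) (disjoint_insert_right.2 ⟨hi, hFK.2⟩) hG]
    exact prod_congr rfl fun S _ => by rw [insert_union, union_insert]

/-- The generators attached to faces of dimension at least `k` are products of those attached to
their `k`-dimensional subfaces. -/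
lemma faceGen_mem_closure {A : Type*} [CommGroup A] {d k : ℕ} (a : A) (m : ℕ) :
    ∀ F K : Finset (Fin d), Disjoint F K → F.card = k + m →
      faceGen (face F K) a ∈ Subgroup.closure
        {g : Finset (Fin d) → A |
          ∃ (Λ : Finset (Finset (Fin d))) (a : A), IsFace Λ k ∧ g = faceGen Λ a} := by
  induction m with
  | zero =>
    intro F K hFK hF
    exact Subgroup.subset_closure ⟨_, a, ⟨F, K, hFK, hF, rfl⟩, rfl⟩
  | succ m ih =>
    intro F K hFK hF
    obtain ⟨i, G, hi, rfl, hG⟩ := card_eq_succ.1 (show F.card = (k + m) + 1 by omega)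
    rw [faceGen_insert hi hFK]
    rw [disjoint_insert_left] at hFK
    exact mul_mem (ih G K hFK.2 hG)
      (ih G (insert i K) (disjoint_insert_right.2 ⟨hi, hFK.2⟩) hG)

/-- Möbius inversion on the Boolean lattice, in multiplicative form. -/
lemma prod_powerset_inversion {A α : Type*} [CommGroup A] [DecidableEq α] (S : Finset α) :
    ∀ h : Finset α → A,
      ∏ T ∈ S.powerset, (∏ R ∈ T.powerset, h R) ^ ((-1 : ℤ) ^ T.card) =
        h S ^ ((-1 : ℤ) ^ S.card) := by
  induction S using Finset.induction_on with
  | empty => intro h; simp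
  | insert i S hi ih =>
    intro h
    rw [prod_powerset_insert hi, ← prod_mul_distrib, card_insert_of_notMem hi, pow_succ,
      mul_neg_one, zpow_neg, ← ih fun R => h (insert i R), ← prod_inv_distrib]
    refine prod_congr rfl fun T hT => ?_
    have hiT : i ∉ T := fun h => hi (mem_powerset.1 hT h)
    rw [prod_powerset_insert hiT, card_insert_of_notMem hiT, pow_succ, mul_neg_one, zpow_neg,
      mul_zpow, mul_inv, mul_inv_cancel_left]

lemma faceGen_mem_Bdk {A : Type*} [CommGroup A] {d k : ℕ} (hkd : k ≤ d)
    {Λ : Finset (Finset (Fin d))} (hΛ : IsFace Λ k) (a : A) : faceGen Λ a ∈ Bdk A d k := by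
  rintro _ ⟨F', K', hFK', hF', rfl⟩
  obtain ⟨F, K, hFK, hF, rfl⟩ := hΛ
  change ∏ S ∈ face F' K', faceGen (face F K) a S = 1
  -- The free coordinate sets have total size `d + 1`, so they meet.
  obtain ⟨i, hi⟩ : (F ∩ F').Nonempty := by
    rw [← card_pos]
    have h1 := card_union_add_card_inter F F'
    have h2 := card_le_univ (F ∪ F')
    rw [Fintype.card_fin] at h2
    omega
  obtain ⟨hiF, hiF'⟩ := mem_inter.1 hi
  let σ : Finset (Fin d) → Finset (Fin d) := fun S => if i ∈ S then S.erase i else insert i S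
  have hσ_sdiff : ∀ S G : Finset (Fin d), i ∈ G → σ S \ G = S \ G := by
    intro S G hG
    by_cases h : i ∈ S
    · simp only [σ, h, if_true]
      rw [erase_sdiff_comm, erase_eq_of_notMem (by simp [hG])]
    · simp only [σ, h, if_false]
      rw [insert_sdiff_of_mem _ hG]
  have hσ_sign : ∀ S : Finset (Fin d), (-1 : ℤ) ^ (σ S).card = -(-1) ^ S.card := by
    intro S
    by_cases h : i ∈ S
    · simp only [σ, h, if_true]
      rw [← card_erase_add_one h, pow_succ, mul_neg_one, neg_neg]
    · simp only [σ, h, if_false]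
      rw [card_insert_of_notMem h, pow_succ, mul_neg_one]
  refine prod_involution (fun S _ => σ S) (fun S _ => ?_) (fun S _ _ hS => ?_)
    (fun S hS => ?_) (fun S _ => ?_)
  · simp only [faceGen, mem_face hFK, hσ_sdiff S F hiF, hσ_sign]
    split_ifs <;> simp
  · have h := hσ_sign S
    rw [hS] at h
    have h0 : (-1 : ℤ) ^ S.card ≠ 0 := pow_ne_zero _ (by norm_num)
    omega
  · rw [mem_face hFK'] at hS ⊢
    rw [hσ_sdiff S F' hiF', hS]
  · by_cases h : i ∈ S <;> simp [σ, h]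

/-- The expansion of `h` along the up-sets `{S | T ⊆ S} = Λ(Tᶜ, T)`. -/
lemma eq_prod_faceGen {A : Type*} [CommGroup A] {d : ℕ} (h : Finset (Fin d) → A) :
    h = ∏ T : Finset (Fin d),
      faceGen (face Tᶜ T) ((∏ R ∈ T.powerset, h R) ^ ((-1 : ℤ) ^ T.card)) := by
  funext S
  have hmem : ∀ T : Finset (Fin d), S ∈ face Tᶜ T ↔ T ∈ S.powerset := fun T => by
    rw [mem_face disjoint_compl_left, sdiff_compl, mem_powerset]
    exact inter_eq_right
  simp only [Finset.prod_apply, faceGen, hmem]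
  rw [prod_ite_mem, univ_inter, prod_zpow, prod_powerset_inversion, ← zpow_mul, ← mul_pow]
  simp

/-- `B_{d,k}` is generated by the elements `g(Λ, a)` for `Λ` a `k`-dimensional
face and `a ∈ A`. -/
theorem Bdk_eq_closure (A : Type*) [CommGroup A] (d k : ℕ) (hk : 1 ≤ k) (hkd : k ≤ d) :
    Bdk A d k = Subgroup.closure
      {g : Finset (Fin d) → A |
        ∃ (Λ : Finset (Finset (Fin d))) (a : A), IsFace Λ k ∧ g = faceGen Λ a} := by
  apply le_antisymm
  · intro h hh
    rw [eq_prod_faceGen h]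
    refine prod_mem fun T _ => ?_
    have hT : T.card ≤ d := by simpa using card_le_univ T
    by_cases hTk : T.card ≤ d - k
    · refine faceGen_mem_closure _ (d - k - T.card) _ _ disjoint_compl_left ?_
      rw [card_compl, Fintype.card_fin]
      omega
    · have h1 : ∏ R ∈ T.powerset, h R = 1 := by
        simpa using prod_face_eq_one hh (T.card - (d - k + 1)) T ∅ (disjoint_empty_right T)
          (by omega)
      have h2 : faceGen (face Tᶜ T) (1 : A) = 1 := by
        funext S
        simp [faceGen]
      rw [h1, one_zpow, h2]
      exact one_mem _
  · rw [Subgroup.closure_le]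
    rintro _ ⟨Λ, a, hΛ, rfl⟩
    exact faceGen_mem_Bdk hkd hΛ a

end Stmt3
end

section
/- Let A be a nonempty finite abelian group and let σ ∈ G_d(A) be an automorphism of the function algebra of A preserving the d-th order convolution. If Λ is a d-dimensional face of the powerset of [d+1] and F = {f_S : A → ℂ}_{S⊆[d+1]} is any family of 2^{d+1} functions, then (F^{σ,Λ})_{d+1} = (F)_{d+1}. Moreover, for any family F' = {f'_S}_{S⊆[d]}, applying σ to every member of F' leaves the Gowers inner product invariant: ({f'^σ_S}_{S⊆[d]})_d = (F')_d. -/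
/-!
The Gowers inner product of order `d + 1` factors partially under the substitution
`y = x + t_j`: for fixed `t_i`, `i ≠ j`, the average over `(x, t_j)` is the product of two
convolutions of order `d`, one over the sets avoiding `j` and one over the sets containing `j`
(`gowersInner_succ`). A `d`-dimensional face of the powerset of `[d+1]` is exactly one of these
two opposite faces for some `j` (`IsFace.exists_index`), so `σ` acts on all members of one
factor and none of the other. The members enter the convolution conjugated, which is harmless
because `σ` commutes with conjugation (`map_conjIter`). The second claim is the same argument
with a single factor, since `(F')_d` is the mean of a convolution (`gowersInner_eq_avg_conv`).
-/

open Finset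

namespace Stmt4

/-- Average of a function over a finite type (uniform probability measure). -/
noncomputable def avg {α : Type*} [Fintype α] (f : α → ℂ) : ℂ :=
  (∑ x, f x) / (Fintype.card α : ℂ)

/-- Complex conjugation applied `n` times. -/
noncomputable def conjIter (n : ℕ) (z : ℂ) : ℂ := (⇑(starRingEnd ℂ))^[n] z

/-- The `k`-th order convolution of a family of `2^k` functions on `A`. -/
noncomputable def conv {A : Type*} [AddCommGroup A] [Fintype A] (k : ℕ)
    (F : Finset (Fin k) → A → ℂ) (t : Fin k → A) : ℂ :=
  avg fun x => ∏ S : Finset (Fin k), F S (x + ∑ i ∈ S, t i)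

/-- The Gowers inner product of a family of `2^k` functions on `A`. -/
noncomputable def gowersInner {A : Type*} [AddCommGroup A] [Fintype A] (k : ℕ)
    (F : Finset (Fin k) → A → ℂ) : ℂ :=
  avg fun p : A × (Fin k → A) => ∏ S : Finset (Fin k),
    conjIter S.card (F S (p.1 + ∑ i ∈ S, p.2 i))

/-- The Gowers uniformity norm `‖f‖_{U_k}`. -/
noncomputable def gowersNorm {A : Type*} [AddCommGroup A] [Fintype A] (k : ℕ)
    (f : A → ℂ) : ℝ :=
  (gowersInner k fun _ => f).re ^ ((1 : ℝ) / 2 ^ k)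

/-- `G_k(A)`: the set of automorphisms of the function algebra of `A` (bijective `ℂ`-linear
maps which are multiplicative, commute with conjugation, and preserve the mean) that preserve
the `k`-th order convolution. -/
def Gk (A : Type*) [AddCommGroup A] [Fintype A] (k : ℕ) :
    Set ((A → ℂ) ≃ₗ[ℂ] (A → ℂ)) :=
  {σ | (∀ f g : A → ℂ, σ (f * g) = σ f * σ g) ∧
       (∀ f : A → ℂ, σ (star f) = star (σ f)) ∧
       (∀ f : A → ℂ, avg (σ f) = avg f) ∧
       ∀ F : Finset (Fin k) → A → ℂ, conv k (fun S => σ (F S)) = conv k F}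

/-- `Λ` is a face of dimension `n` in the powerset of `[d]`. -/
def IsFace {d : ℕ} (Λ : Finset (Finset (Fin d))) (n : ℕ) : Prop :=
  ∃ F K : Finset (Fin d), Disjoint F K ∧ F.card = n ∧
    Λ = F.powerset.image (fun S => S ∪ K)

lemma map_conjIter {A : Type*} (σ : (A → ℂ) ≃ₗ[ℂ] (A → ℂ))
    (hstar : ∀ f : A → ℂ, σ (star f) = star (σ f)) (n : ℕ) (f : A → ℂ) :
    σ (fun a => conjIter n (f a)) = fun a => conjIter n (σ f a) := by
  induction n with
  | zero => rfl
  | succ n ih =>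
    have h : ∀ g : A → ℂ, (fun a => conjIter (n + 1) (g a)) = star fun a => conjIter n (g a) := by
      intro g
      funext a
      simp [conjIter, Function.iterate_succ_apply']
    rw [h, hstar, ih, h]

/-- The Gowers inner product is the mean of the convolution of the conjugated family. -/
lemma gowersInner_eq_avg_conv {A : Type*} [AddCommGroup A] [Fintype A] (k : ℕ)
    (F : Finset (Fin k) → A → ℂ) :
    gowersInner k F = avg fun t => conv k (fun S a => conjIter S.card (F S a)) t := by
  simp only [gowersInner, conv, avg]
  rw [Fintype.sum_prod_type_right, ← Finset.sum_div, Fintype.card_prod, div_div]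
  push_cast
  rfl

/-- Subsets of `[d+1]` split into those avoiding `j` and those containing `j`. -/
lemma prod_finset_succAbove {M : Type*} [CommMonoid M] {d : ℕ} (j : Fin (d + 1))
    (g : Finset (Fin (d + 1)) → M) :
    ∏ S, g S = (∏ S : Finset (Fin d), g (S.map j.succAboveEmb)) *
      ∏ S : Finset (Fin d), g (insert j (S.map j.succAboveEmb)) := by
  have hu : (univ : Finset (Finset (Fin (d + 1)))) =
      (insert j ((univ : Finset (Fin d)).map j.succAboveEmb)).powerset := by
    rw [← powerset_univ]
    congr 1
    ext x
    rcases Fin.eq_self_or_eq_succAbove j x with h | ⟨y, h⟩ <;> simp [h]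
  have hp : ((univ : Finset (Fin d)).map j.succAboveEmb).powerset =
      (univ : Finset (Finset (Fin d))).map (mapEmbedding j.succAboveEmb).toEmbedding := by
    ext T
    simp only [mem_powerset, subset_map_iff, mem_map, mem_univ, true_and, subset_univ]
    simp [eq_comm]
  rw [hu, prod_powerset_insert (by simp), hp, prod_map, prod_map]
  rfl

/-- Splitting off the variable `t_j` and substituting `y = x + t_j` factors the inner average of
the Gowers inner product of order `d + 1` into two convolutions of order `d`, one for each of
the two opposite faces in direction `j`. -/
lemma gowersInner_succ {A : Type*} [AddCommGroup A] [Fintype A] {d : ℕ} (j : Fin (d + 1))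
    (F : Finset (Fin (d + 1)) → A → ℂ) :
    gowersInner (d + 1) F = avg fun t : Fin d → A =>
      conv d (fun S a => conjIter S.card (F (S.map j.succAboveEmb) a)) t *
      conv d (fun S a => conjIter (S.card + 1) (F (insert j (S.map j.succAboveEmb)) a)) t := by
  simp only [gowersInner, conv, avg, div_mul_div_comm]
  rw [← Finset.sum_div, div_div]
  congr 1
  · rw [Fintype.sum_prod_type_right, ← (Fin.insertNthEquiv (fun _ => A) j).sum_comp,
      Fintype.sum_prod_type_right]
    refine Finset.sum_congr rfl fun t _ => ?_
    rw [Finset.sum_comm, Finset.sum_mul_sum]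
    refine Finset.sum_congr rfl fun x _ => ?_
    refine Fintype.sum_equiv (Equiv.addLeft x) _ _ fun y => ?_
    rw [prod_finset_succAbove j]
    congr 1 <;> refine Finset.prod_congr rfl fun S _ => ?_
    · simp [Fin.insertNthEquiv]
    · rw [card_insert_of_notMem (by simp), sum_insert (by simp)]
      simp [Fin.insertNthEquiv, add_assoc]
  · simp only [Fintype.card_prod, Fintype.card_pi, prod_const, card_univ, Fintype.card_fin]
    push_cast
    ring

/-- A `d`-dimensional face of the powerset of `[d+1]` is, for some `j`, either the set of all
subsets avoiding `j` or the set of all subsets containing `j`. -/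
lemma IsFace.exists_index {d : ℕ} {Λ : Finset (Finset (Fin (d + 1)))} (h : IsFace Λ d) :
    ∃ j, (∀ S, S ∈ Λ ↔ j ∉ S) ∨ (∀ S, S ∈ Λ ↔ j ∈ S) := by
  obtain ⟨F, K, hFK, hF, rfl⟩ := h
  have hc : Fᶜ.card = 1 := by rw [card_compl, hF, Fintype.card_fin]; omega
  obtain ⟨j, hj⟩ := card_eq_one.mp hc
  obtain rfl : F = {j}ᶜ := by rw [← hj, compl_compl]
  have hK : K ⊆ {j} := by
    simpa using (le_compl_iff_disjoint_left.mpr hFK : K ≤ _)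
  refine ⟨j, ?_⟩
  rcases subset_singleton_iff.mp hK with rfl | rfl
  · left
    intro S
    simp
  · right
    intro S
    simp only [mem_image, mem_powerset]
    constructor
    · rintro ⟨T, -, rfl⟩
      simp
    · intro hS
      exact ⟨S.erase j, by simp, by ext x; by_cases hx : x = j <;> simp [hx, hS]⟩

/-- if `σ ∈ G_d(A)`, `Λ` is a `d`-dimensional face of the powerset of `[d+1]`,
then applying `σ` to the members of a family indexed by `Λ` leaves the Gowers inner product
`(·)_{d+1}` invariant; moreover applying `σ` to every member of a family indexed by subsets
of `[d]` leaves `(·)_d` invariant. -/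
theorem gowersInner_face_invariant {A : Type*} [AddCommGroup A] [Fintype A] (d : ℕ)
    (σ : (A → ℂ) ≃ₗ[ℂ] (A → ℂ)) (hσ : σ ∈ Gk A d)
    (Λ : Finset (Finset (Fin (d + 1)))) (hΛ : IsFace Λ d)
    (F : Finset (Fin (d + 1)) → A → ℂ) (F' : Finset (Fin d) → A → ℂ) :
    gowersInner (d + 1) (fun S => if S ∈ Λ then σ (F S) else F S) = gowersInner (d + 1) F ∧
    gowersInner d (fun S => σ (F' S)) = gowersInner d F' := by
  obtain ⟨-, hstar, -, hconv⟩ := hσ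
  -- Invariance of the convolution, with an iterated conjugate on each member of the family.
  have key : ∀ (n : Finset (Fin d) → ℕ) (G : Finset (Fin d) → A → ℂ),
      conv d (fun S a => conjIter (n S) (σ (G S) a)) =
        conv d (fun S a => conjIter (n S) (G S a)) := by
    intro n G
    rw [← hconv fun S a => conjIter (n S) (G S a)]
    simp only [map_conjIter σ hstar]
  refine ⟨?_, ?_⟩
  · obtain ⟨j, hj | hj⟩ := hΛ.exists_index
    · rw [gowersInner_succ j, gowersInner_succ j]
      simp [hj, key]
    · rw [gowersInner_succ j, gowersInner_succ j]
      simp [hj, key]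
  · rw [gowersInner_eq_avg_conv, gowersInner_eq_avg_conv, key]

end Stmt4
end

section
/- Let A be a nonempty finite abelian group and let σ ∈ G_k(A) be an automorphism of the function algebra of A preserving the k-th order convolution. Then for every function f : A → ℂ one has ‖f^σ‖_{U_{k+1}} = ‖f‖_{U_{k+1}}. -/
/-!
The `U_{k+1}` norm is a function of the `k`-th order convolution. With `F_S = C^{|S|} f`, split
the cube `{0,1}^{k+1}` into two parallel faces and take as independent base points `x` and
`y = x + t₀`. The averages over `x` and `y` then separate, which gives
`‖f‖_{U_{k+1}}^{2^{k+1}} = 𝔼_t Conv_k(F)(t) · conj (Conv_k(F)(t))`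
(`gowersInner_succ`). An automorphism `σ` commutes with conjugation, so it carries the family
built from `f` to the one built from `σ f`; preservation of `Conv_k` finishes the argument.
-/

open Finset

namespace Stmt5

/-- Average of a function over a finite type (uniform probability measure). -/
noncomputable def avg {α : Type*} [Fintype α] (f : α → ℂ) : ℂ :=
  (∑ x, f x) / (Fintype.card α : ℂ)

/-- Complex conjugation applied `n` times. -/
noncomputable def conjIter (n : ℕ) (z : ℂ) : ℂ := (⇑(starRingEnd ℂ))^[n] z

/-- The `k`-th order convolution of a family of `2^k` functions on `A`. -/
noncomputable def conv {A : Type*} [AddCommGroup A] [Fintype A] (k : ℕ)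
    (F : Finset (Fin k) → A → ℂ) (t : Fin k → A) : ℂ :=
  avg fun x => ∏ S : Finset (Fin k), F S (x + ∑ i ∈ S, t i)

/-- The Gowers inner product of a family of `2^k` functions on `A`. -/
noncomputable def gowersInner {A : Type*} [AddCommGroup A] [Fintype A] (k : ℕ)
    (F : Finset (Fin k) → A → ℂ) : ℂ :=
  avg fun p : A × (Fin k → A) => ∏ S : Finset (Fin k),
    conjIter S.card (F S (p.1 + ∑ i ∈ S, p.2 i))

/-- The Gowers uniformity norm `‖f‖_{U_k}`. -/
noncomputable def gowersNorm {A : Type*} [AddCommGroup A] [Fintype A] (k : ℕ)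
    (f : A → ℂ) : ℝ :=
  (gowersInner k fun _ => f).re ^ ((1 : ℝ) / 2 ^ k)

/-- `G_k(A)`: the set of automorphisms of the function algebra of `A` (bijective `ℂ`-linear
maps which are multiplicative, commute with conjugation, and preserve the mean) that preserve
the `k`-th order convolution. -/
def Gk (A : Type*) [AddCommGroup A] [Fintype A] (k : ℕ) :
    Set ((A → ℂ) ≃ₗ[ℂ] (A → ℂ)) :=
  {σ | (∀ f g : A → ℂ, σ (f * g) = σ f * σ g) ∧
       (∀ f : A → ℂ, σ (star f) = star (σ f)) ∧
       (∀ f : A → ℂ, avg (σ f) = avg f) ∧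
       ∀ F : Finset (Fin k) → A → ℂ, conv k (fun S => σ (F S)) = conv k F}

/-- The subsets of `Fin (k + 1)` are the subsets of `Fin k`, shifted, with or without `0`. -/
lemma prod_finset_fin_succ {k : ℕ} (g : Finset (Fin (k + 1)) → ℂ) :
    ∏ S, g S = (∏ S : Finset (Fin k), g (S.map (Fin.succEmb k))) *
      ∏ S : Finset (Fin k), g (insert 0 (S.map (Fin.succEmb k))) := by
  have h0 : (0 : Fin (k + 1)) ∉ (univ : Finset (Fin k)).map (Fin.succEmb k) := by simp
  have hu : (univ : Finset (Fin (k + 1))) = insert 0 (univ.map (Fin.succEmb k)) := by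
    ext i; refine Fin.cases ?_ (fun j => ?_) i <;> simp
  have hp : ((univ : Finset (Fin k)).map (Fin.succEmb k)).powerset =
      (univ : Finset (Finset (Fin k))).map (mapEmbedding (Fin.succEmb k)).toEmbedding := by
    ext S
    simp only [mem_powerset, subset_map_iff, mem_map, mem_univ, true_and]
    constructor
    · rintro ⟨u, -, rfl⟩; exact ⟨u, rfl⟩
    · rintro ⟨u, rfl⟩; exact ⟨u, subset_univ _, rfl⟩
  rw [← powerset_univ, hu, prod_powerset_insert h0, hp, prod_map, prod_map]
  rfl

lemma conjIter_succ (n : ℕ) (z : ℂ) :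
    conjIter (n + 1) z = starRingEnd ℂ (conjIter n z) :=
  Function.iterate_succ_apply' _ _ _

/-- The Gowers inner product of order `k + 1` is the mean squared modulus of a `k`-th order
convolution. -/
lemma gowersInner_succ {A : Type*} [AddCommGroup A] [Fintype A] (k : ℕ) (f : A → ℂ) :
    gowersInner (k + 1) (fun _ => f) =
      avg fun t : Fin k → A =>
        conv k (fun S x => conjIter S.card (f x)) t *
          starRingEnd ℂ (conv k (fun S x => conjIter S.card (f x)) t) := by
  -- The integrand on the cube with base point `x` and directions `t₀, t₁, …`.
  have key : ∀ (x t₀ : A) (t : Fin k → A),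
      (∏ S : Finset (Fin (k + 1)),
        conjIter S.card (f (x + ∑ i ∈ S, (Fin.cons t₀ t : Fin (k + 1) → A) i))) =
      (∏ S : Finset (Fin k), conjIter S.card (f (x + ∑ i ∈ S, t i))) *
        starRingEnd ℂ (∏ S : Finset (Fin k),
          conjIter S.card (f ((x + t₀) + ∑ i ∈ S, t i))) := by
    intro x t₀ t
    rw [prod_finset_fin_succ, map_prod]
    congr 1
    · simp
    · refine prod_congr rfl fun S _ => ?_
      have h0 : (0 : Fin (k + 1)) ∉ S.map (Fin.succEmb k) := by simp
      rw [card_insert_of_notMem h0, sum_insert h0, card_map, conjIter_succ, sum_map]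
      simp [add_assoc]
  unfold gowersInner conv avg
  rw [Fintype.sum_prod_type]
  simp only [← (Fin.consEquiv fun _ : Fin (k + 1) => A).sum_comp, Fintype.sum_prod_type,
    Fin.consEquiv_apply, key]
  -- Replace `t₀` by the second base point `y = x + t₀`.
  have shift : ∀ (x : A) (h : A → ℂ), ∑ t₀, h (x + t₀) = ∑ y, h y := fun x h =>
    Equiv.sum_comp (Equiv.addLeft x) h
  have hsum : ∀ G : (Fin k → A) → A → ℂ,
      ∑ x, ∑ t₀, ∑ t, G t x * starRingEnd ℂ (G t (x + t₀)) =
        ∑ t, (∑ x, G t x) * starRingEnd ℂ (∑ x, G t x) := by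
    intro G
    have h1 : ∀ x, ∑ t₀, ∑ t, G t x * starRingEnd ℂ (G t (x + t₀)) =
        ∑ t, G t x * starRingEnd ℂ (∑ y, G t y) := by
      intro x
      rw [shift x fun y => ∑ t, G t x * starRingEnd ℂ (G t y), sum_comm]
      simp only [map_sum, mul_sum]
    simp only [h1]
    rw [sum_comm]
    simp only [← sum_mul]
  rw [hsum fun t x => ∏ S : Finset (Fin k), conjIter S.card (f (x + ∑ i ∈ S, t i))]
  simp only [map_div₀, map_natCast, div_mul_div_comm, ← sum_div, div_div]
  congr 1
  simp only [Fintype.card_prod, Fintype.card_fun, Fintype.card_fin]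
  push_cast
  ring

lemma map_conjIter {A : Type*} (σ : (A → ℂ) ≃ₗ[ℂ] (A → ℂ))
    (hσ : ∀ f : A → ℂ, σ (star f) = star (σ f)) (n : ℕ) (f : A → ℂ) :
    σ (fun x => conjIter n (f x)) = fun x => conjIter n (σ f x) := by
  induction n with
  | zero => rfl
  | succ n ih =>
    simp only [conjIter_succ]
    have := hσ fun x => conjIter n (f x)
    rw [ih] at this
    exact this

/-- every `σ ∈ G_k(A)` preserves the `U_{k+1}` norm. -/
theorem gowersNorm_succ_invariant {A : Type*} [AddCommGroup A] [Fintype A] (k : ℕ)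
    (σ : (A → ℂ) ≃ₗ[ℂ] (A → ℂ)) (hσ : σ ∈ Gk A k) (f : A → ℂ) :
    gowersNorm (k + 1) (σ f) = gowersNorm (k + 1) f := by
  have hconv : conv k (fun S x => conjIter S.card (σ f x)) =
      conv k (fun S x => conjIter S.card (f x)) := by
    rw [← hσ.2.2.2 fun S x => conjIter S.card (f x)]
    simp only [map_conjIter σ hσ.2.1]
  unfold gowersNorm
  rw [gowersInner_succ, gowersInner_succ, hconv]

end Stmt5
end

section
/- Let A be a nonempty finite abelian group and let σ ∈ G_k(A) be an automorphism of the function algebra of A preserving the k-th order convolution. Then σ preserves all lower uniformity norms: for every function f : A → ℂ and every 1 ≤ i ≤ k one has ‖f^σ‖_{U_i} = ‖f‖_{U_i}. -/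
/-!
The `i`-th order convolution is the special case of the `k`-th order one in which every function
attached to a set `S ⊄ {1, …, i}` is the constant `1` (`conv_extend`). An automorphism of the
function algebra fixes `1`, so preserving the `k`-th order convolution forces it to preserve the
`i`-th order one (`conv_invariant_of_le`). Finally `‖f‖_{U_i}^{2^i}` is the mean over
`t₁, …, t_i` of the `i`-th order convolution of copies of `f` and its conjugate
(`gowersInner_eq_avg_conv`), and the automorphism commutes with conjugation.
-/

open Finset

namespace Stmt6

/-- Average of a function over a finite type (uniform probability measure). -/
noncomputable def avg {α : Type*} [Fintype α] (f : α → ℂ) : ℂ :=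
  (∑ x, f x) / (Fintype.card α : ℂ)

/-- Complex conjugation applied `n` times. -/
noncomputable def conjIter (n : ℕ) (z : ℂ) : ℂ := (⇑(starRingEnd ℂ))^[n] z

/-- The `k`-th order convolution of a family of `2^k` functions on `A`. -/
noncomputable def conv {A : Type*} [AddCommGroup A] [Fintype A] (k : ℕ)
    (F : Finset (Fin k) → A → ℂ) (t : Fin k → A) : ℂ :=
  avg fun x => ∏ S : Finset (Fin k), F S (x + ∑ i ∈ S, t i)

/-- The Gowers inner product of a family of `2^k` functions on `A`. -/
noncomputable def gowersInner {A : Type*} [AddCommGroup A] [Fintype A] (k : ℕ)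
    (F : Finset (Fin k) → A → ℂ) : ℂ :=
  avg fun p : A × (Fin k → A) => ∏ S : Finset (Fin k),
    conjIter S.card (F S (p.1 + ∑ i ∈ S, p.2 i))

/-- The Gowers uniformity norm `‖f‖_{U_k}`. -/
noncomputable def gowersNorm {A : Type*} [AddCommGroup A] [Fintype A] (k : ℕ)
    (f : A → ℂ) : ℝ :=
  (gowersInner k fun _ => f).re ^ ((1 : ℝ) / 2 ^ k)

/-- `G_k(A)`: the set of automorphisms of the function algebra of `A` (bijective `ℂ`-linear
maps which are multiplicative, commute with conjugation, and preserve the mean) that preserve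
the `k`-th order convolution. -/
def Gk (A : Type*) [AddCommGroup A] [Fintype A] (k : ℕ) :
    Set ((A → ℂ) ≃ₗ[ℂ] (A → ℂ)) :=
  {σ | (∀ f g : A → ℂ, σ (f * g) = σ f * σ g) ∧
       (∀ f : A → ℂ, σ (star f) = star (σ f)) ∧
       (∀ f : A → ℂ, avg (σ f) = avg f) ∧
       ∀ F : Finset (Fin k) → A → ℂ, conv k (fun S => σ (F S)) = conv k F}

theorem avg_prod {α β : Type*} [Fintype α] [Fintype β] (f : α × β → ℂ) :
    avg f = avg fun b => avg fun a => f (a, b) := by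
  unfold avg
  rw [Fintype.sum_prod_type_right, Fintype.card_prod, ← Finset.sum_div, div_div]
  push_cast
  rfl

theorem gowersInner_eq_avg_conv {A : Type*} [AddCommGroup A] [Fintype A] (k : ℕ)
    (F : Finset (Fin k) → A → ℂ) :
    gowersInner k F = avg (conv k fun S x => conjIter S.card (F S x)) := by
  unfold gowersInner
  rw [avg_prod]
  rfl

/-- The `i`-th order convolution of `G` is a `k`-th order convolution of the extension of `G` by
the constant function `1`; the remaining shifts do not matter and are set to `0`. -/
theorem conv_extend {A : Type*} [AddCommGroup A] [Fintype A] {i k : ℕ} (hik : i ≤ k)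
    (G : Finset (Fin i) → A → ℂ) (s : Fin i → A) :
    conv k (Function.extend (Finset.map (Fin.castLEEmb hik)) G fun _ => 1)
      (Function.extend (Fin.castLEEmb hik) s 0) = conv i G s := by
  unfold conv
  congr 1
  funext x
  symm
  refine Fintype.prod_of_injective _ (Finset.map_injective (Fin.castLEEmb hik)) _ _ ?_ ?_
  · intro S hS
    rw [Function.extend_apply' _ _ _ (by simpa using hS)]
    rfl
  · intro S
    rw [(Finset.map_injective _).extend_apply, Finset.sum_map]
    simp only [(Fin.castLEEmb hik).injective.extend_apply]

theorem map_one_of_map_mul {A : Type*} (σ : (A → ℂ) ≃ₗ[ℂ] (A → ℂ))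
    (hmul : ∀ f g : A → ℂ, σ (f * g) = σ f * σ g) : σ 1 = 1 := by
  have h := hmul 1 (σ.symm 1)
  rw [one_mul, LinearEquiv.apply_symm_apply, mul_one] at h
  exact h.symm

theorem conv_invariant_of_le {A : Type*} [AddCommGroup A] [Fintype A] {i k : ℕ} (hik : i ≤ k)
    (σ : (A → ℂ) ≃ₗ[ℂ] (A → ℂ)) (hσ : σ ∈ Gk A k) (G : Finset (Fin i) → A → ℂ) :
    conv i (fun S => σ (G S)) = conv i G := by
  obtain ⟨hmul, -, -, hconv⟩ := hσ
  funext s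
  rw [← conv_extend hik, ← conv_extend hik G, ← hconv (Function.extend _ G fun _ => 1)]
  congr 1
  funext S
  by_cases hS : ∃ T, Finset.map (Fin.castLEEmb hik) T = S
  · obtain ⟨T, rfl⟩ := hS
    simp only [(Finset.map_injective _).extend_apply]
  · rw [Function.extend_apply' _ _ _ hS, Function.extend_apply' _ _ _ hS]
    exact (map_one_of_map_mul σ hmul).symm

theorem map_conjIter {A : Type*} (σ : (A → ℂ) ≃ₗ[ℂ] (A → ℂ))
    (hstar : ∀ f : A → ℂ, σ (star f) = star (σ f)) (n : ℕ) (f : A → ℂ) :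
    σ (fun x => conjIter n (f x)) = fun x => conjIter n (σ f x) := by
  induction n with
  | zero => rfl
  | succ n ih =>
    have h (g : A → ℂ) :
        (fun x => conjIter (n + 1) (g x)) = star fun x => conjIter n (g x) := by
      funext x
      simp only [conjIter, Function.iterate_succ_apply', Pi.star_apply, starRingEnd_apply]
    rw [h, h, hstar, ih]

/-- every `σ ∈ G_k(A)` preserves the uniformity norms `U_i` for `1 ≤ i ≤ k`. -/
theorem gowersNorm_le_invariant {A : Type*} [AddCommGroup A] [Fintype A] (k : ℕ)
    (σ : (A → ℂ) ≃ₗ[ℂ] (A → ℂ)) (hσ : σ ∈ Gk A k) (f : A → ℂ)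
    (i : ℕ) (hi1 : 1 ≤ i) (hik : i ≤ k) :
    gowersNorm i (σ f) = gowersNorm i f := by
  unfold gowersNorm
  rw [gowersInner_eq_avg_conv, gowersInner_eq_avg_conv,
    ← conv_invariant_of_le hik σ hσ fun S x => conjIter S.card (f x)]
  simp only [map_conjIter σ hσ.2.1]

end Stmt6
end

section
/- Let A be a nonempty finite abelian group, let σ ∈ G_k(A) be an automorphism of the function algebra of A preserving the k-th order convolution, and let f, f₂ : A → ℂ. Then 𝔼_{t∈A} ‖x ↦ f^σ(x)·conj(f₂(x+t))‖_{U_k}^{2^k} = 𝔼_{t∈A} ‖x ↦ f(x)·conj(f₂(x+t))‖_{U_k}^{2^k}. -/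
/-!
The power `‖f‖_{U_k}^{2^k}` is the real part of the Gowers inner product `⟨f, …, f⟩`. This needs
that real part to be nonnegative when `k ≥ 1`: summing out one of the difference variables turns
it into a sum of squared moduli (`gowersInner_succ_re_nonneg`). For `k = 0` both exponents are `1`.

In `∑ t, ⟨f · conj f₂(· + t)⟩`, substituting `y = x + t` makes the sums over `x` and `y` independent
for fixed differences `h`, so the expression is a pairing, over `h`, of the `k`-th order convolution
of the family `S ↦ C^|S| f` with a function of `h` that depends only on `f₂`
(`sum_gowersInner_shift`). As `σ` commutes with conjugation, it maps the family `S ↦ C^|S| f`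
to `S ↦ C^|S| (σ f)`, and the convolution is unchanged because `σ ∈ G_k(A)`.
-/

open Finset

namespace Stmt8

/-- Average of a function over a finite type (uniform probability measure). -/
noncomputable def avg {α : Type*} [Fintype α] (f : α → ℂ) : ℂ :=
  (∑ x, f x) / (Fintype.card α : ℂ)

/-- Complex conjugation applied `n` times. -/
noncomputable def conjIter (n : ℕ) (z : ℂ) : ℂ := (⇑(starRingEnd ℂ))^[n] z

/-- The `k`-th order convolution of a family of `2^k` functions on `A`. -/
noncomputable def conv {A : Type*} [AddCommGroup A] [Fintype A] (k : ℕ)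
    (F : Finset (Fin k) → A → ℂ) (t : Fin k → A) : ℂ :=
  avg fun x => ∏ S : Finset (Fin k), F S (x + ∑ i ∈ S, t i)

/-- The Gowers inner product of a family of `2^k` functions on `A`. -/
noncomputable def gowersInner {A : Type*} [AddCommGroup A] [Fintype A] (k : ℕ)
    (F : Finset (Fin k) → A → ℂ) : ℂ :=
  avg fun p : A × (Fin k → A) => ∏ S : Finset (Fin k),
    conjIter S.card (F S (p.1 + ∑ i ∈ S, p.2 i))

/-- The Gowers uniformity norm `‖f‖_{U_k}`. -/
noncomputable def gowersNorm {A : Type*} [AddCommGroup A] [Fintype A] (k : ℕ)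
    (f : A → ℂ) : ℝ :=
  (gowersInner k fun _ => f).re ^ ((1 : ℝ) / 2 ^ k)

/-- `G_k(A)`: the set of automorphisms of the function algebra of `A` (bijective `ℂ`-linear
maps which are multiplicative, commute with conjugation, and preserve the mean) that preserve
the `k`-th order convolution. -/
def Gk (A : Type*) [AddCommGroup A] [Fintype A] (k : ℕ) :
    Set ((A → ℂ) ≃ₗ[ℂ] (A → ℂ)) :=
  {σ | (∀ f g : A → ℂ, σ (f * g) = σ f * σ g) ∧
       (∀ f : A → ℂ, σ (star f) = star (σ f)) ∧
       (∀ f : A → ℂ, avg (σ f) = avg f) ∧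
       ∀ F : Finset (Fin k) → A → ℂ, conv k (fun S => σ (F S)) = conv k F}

lemma conjIter_mul (n : ℕ) (z w : ℂ) : conjIter n (z * w) = conjIter n z * conjIter n w := by
  induction n with
  | zero => rfl
  | succ n ih =>
    simp only [conjIter, Function.iterate_succ_apply'] at ih ⊢
    rw [ih, map_mul]

lemma conjIter_succ (n : ℕ) (z : ℂ) : conjIter (n + 1) z = (starRingEnd ℂ) (conjIter n z) := by
  simp only [conjIter, Function.iterate_succ_apply']

/-- A product over the subsets of `[k + 1]`, split according to whether they contain `0`. -/
lemma prod_finset_fin_succ {k : ℕ} (g : Finset (Fin (k + 1)) → ℂ) :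
    ∏ S, g S = (∏ T : Finset (Fin k), g (T.map (Fin.succEmb k))) *
      ∏ T : Finset (Fin k), g (insert 0 (T.map (Fin.succEmb k))) := by
  have h0 (T : Finset (Fin k)) : (0 : Fin (k + 1)) ∉ T.map (Fin.succEmb k) := by
    simp [Fin.succ_ne_zero]
  have hpow : (univ.map (Fin.succEmb k)).powerset
      = univ.map (Finset.mapEmbedding (Fin.succEmb k)).toEmbedding := by
    ext S
    simp only [mem_powerset, Finset.mem_map, mem_univ, true_and]
    constructor
    · intro h
      obtain ⟨T, -, rfl⟩ := Finset.subset_map_iff.1 h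
      exact ⟨T, rfl⟩
    · rintro ⟨T, rfl⟩
      exact Finset.map_subset_map.2 (subset_univ T)
  have huniv : (univ : Finset (Fin (k + 1))) = insert 0 (univ.map (Fin.succEmb k)) := by
    ext i
    refine Fin.cases ?_ (fun j => ?_) i <;> simp
  rw [← Finset.powerset_univ, huniv, Finset.prod_powerset_insert (h0 univ), hpow,
    Finset.prod_map, Finset.prod_map]
  rfl

/-- Summing out the difference variable with index `0` leaves a sum of squared moduli. -/
lemma gowersInner_succ_re_nonneg {A : Type*} [AddCommGroup A] [Fintype A] (k : ℕ)
    (f : A → ℂ) : 0 ≤ (gowersInner (k + 1) fun _ => f).re := by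
  set P : A → (Fin k → A) → ℂ := fun x t =>
    ∏ T : Finset (Fin k), conjIter T.card (f (x + ∑ i ∈ T, t i)) with hP
  have hfac (x a : A) (t : Fin k → A) :
      ∏ S : Finset (Fin (k + 1)), conjIter S.card
        (f (x + ∑ i ∈ S, (Fin.cons a t : Fin (k + 1) → A) i))
        = P x t * (starRingEnd ℂ) (P (x + a) t) := by
    have h0 (T : Finset (Fin k)) : (0 : Fin (k + 1)) ∉ T.map (Fin.succEmb k) := by
      simp [Fin.succ_ne_zero]
    rw [prod_finset_fin_succ, hP, map_prod]
    congr 1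
    · refine Finset.prod_congr rfl fun T _ => ?_
      simp
    · refine Finset.prod_congr rfl fun T _ => ?_
      rw [Finset.card_insert_of_notMem (h0 T), Finset.sum_insert (h0 T), conjIter_succ]
      simp [add_assoc]
  have hsum : ∑ p : A × (Fin (k + 1) → A), ∏ S : Finset (Fin (k + 1)),
      conjIter S.card (f (p.1 + ∑ i ∈ S, p.2 i))
        = ((∑ t : Fin k → A, Complex.normSq (∑ x, P x t) : ℝ) : ℂ) := by
    calc _ = ∑ x : A, ∑ a : A, ∑ t : Fin k → A, P x t * (starRingEnd ℂ) (P (x + a) t) := by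
          rw [Fintype.sum_prod_type]
          refine Finset.sum_congr rfl fun x _ => ?_
          rw [← (Fin.consEquiv fun _ : Fin (k + 1) => A).sum_comp, Fintype.sum_prod_type]
          exact Finset.sum_congr rfl fun a _ => Finset.sum_congr rfl fun t _ => hfac x a t
      _ = ∑ x : A, ∑ y : A, ∑ t : Fin k → A, P x t * (starRingEnd ℂ) (P y t) :=
          Finset.sum_congr rfl fun x _ => Equiv.sum_comp (Equiv.addLeft x) fun y =>
            ∑ t : Fin k → A, P x t * (starRingEnd ℂ) (P y t)
      _ = ∑ t : Fin k → A, (∑ x, P x t) * (starRingEnd ℂ) (∑ y, P y t) := by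
          simp_rw [map_sum, Finset.sum_mul_sum]
          rw [Finset.sum_comm (s := (univ : Finset (Fin k → A)))]
          exact Finset.sum_congr rfl fun x _ => Finset.sum_comm
      _ = _ := by
          rw [Complex.ofReal_sum]
          exact Finset.sum_congr rfl fun t _ => Complex.mul_conj _
  unfold gowersInner avg
  rw [hsum, ← Complex.ofReal_natCast, ← Complex.ofReal_div, Complex.ofReal_re]
  exact div_nonneg (Finset.sum_nonneg fun t _ => Complex.normSq_nonneg _) (Nat.cast_nonneg _)

/-- For `k = 0` the real part of the inner product may be negative, but then the
exponents are both `1`. -/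
lemma gowersNorm_pow {A : Type*} [AddCommGroup A] [Fintype A] (k : ℕ) (f : A → ℂ) :
    gowersNorm k f ^ (2 ^ k) = (gowersInner k fun _ => f).re := by
  cases k with
  | zero => simp [gowersNorm]
  | succ k =>
    rw [gowersNorm, ← Real.rpow_natCast,
      ← Real.rpow_mul (gowersInner_succ_re_nonneg k f)]
    have h : (1 : ℝ) / 2 ^ (k + 1) * ((2 ^ (k + 1) : ℕ) : ℝ) = 1 := by
      push_cast
      field_simp
    rw [h, Real.rpow_one]

/-- Averaging over the shift decouples the two functions: with `y = x + t` the sum becomes a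
pairing of the convolution of the family `C^|S| f` with a quantity depending only on `g`. -/
lemma sum_gowersInner_shift {A : Type*} [AddCommGroup A] [Fintype A] (k : ℕ) (f g : A → ℂ) :
    ∑ t : A, gowersInner k (fun _ x => f x * g (x + t)) =
      (∑ h : Fin k → A, conv k (fun S x => conjIter S.card (f x)) h *
        ∑ y : A, ∏ S : Finset (Fin k), conjIter S.card (g (y + ∑ i ∈ S, h i))) *
        (Fintype.card A : ℂ) / (Fintype.card (A × (Fin k → A)) : ℂ) := by
  have hcard : (Fintype.card A : ℂ) ≠ 0 := Nat.cast_ne_zero.2 Fintype.card_ne_zero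
  simp only [gowersInner, avg, conv]
  rw [← Finset.sum_div]
  congr 1
  simp_rw [conjIter_mul, Finset.prod_mul_distrib, Fintype.sum_prod_type]
  calc _ = ∑ x : A, ∑ h : Fin k → A, ∑ t : A,
        (∏ S : Finset (Fin k), conjIter S.card (f (x + ∑ i ∈ S, h i))) *
          ∏ S : Finset (Fin k), conjIter S.card (g (x + ∑ i ∈ S, h i + t)) := by
        rw [Finset.sum_comm]
        exact Finset.sum_congr rfl fun x _ => Finset.sum_comm
    _ = ∑ x : A, ∑ h : Fin k → A, ∑ y : A,
        (∏ S : Finset (Fin k), conjIter S.card (f (x + ∑ i ∈ S, h i))) *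
          ∏ S : Finset (Fin k), conjIter S.card (g (y + ∑ i ∈ S, h i)) := by
        refine Finset.sum_congr rfl fun x _ => Finset.sum_congr rfl fun h _ => ?_
        refine Eq.trans ?_ (Equiv.sum_comp (Equiv.addLeft x) _)
        simp [add_right_comm]
    _ = _ := by
        rw [Finset.sum_comm, Finset.sum_mul]
        refine Finset.sum_congr rfl fun h _ => ?_
        simp_rw [← Finset.mul_sum, ← Finset.sum_mul]
        field_simp

/-- An automorphism commuting with conjugation commutes with its iterates. -/
lemma map_conjIter {A : Type*} (σ : (A → ℂ) ≃ₗ[ℂ] (A → ℂ))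
    (hσ : ∀ f : A → ℂ, σ (star f) = star (σ f)) (n : ℕ) (f : A → ℂ) :
    σ (fun x => conjIter n (f x)) = fun x => conjIter n (σ f x) := by
  induction n with
  | zero => rfl
  | succ n ih =>
    simp_rw [conjIter_succ]
    have := hσ fun x => conjIter n (f x)
    rw [ih] at this
    exact this

/-- for `σ ∈ G_k(A)`,
`𝔼_t ‖x ↦ f^σ(x)·conj(f₂(x+t))‖_{U_k}^{2^k} = 𝔼_t ‖x ↦ f(x)·conj(f₂(x+t))‖_{U_k}^{2^k}`. -/
theorem avg_gowersNorm_pow_invariant {A : Type*} [AddCommGroup A] [Fintype A] (k : ℕ)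
    (σ : (A → ℂ) ≃ₗ[ℂ] (A → ℂ)) (hσ : σ ∈ Gk A k) (f f₂ : A → ℂ) :
    (∑ t : A, gowersNorm k (fun x => σ f x * (starRingEnd ℂ) (f₂ (x + t))) ^ (2 ^ k)) /
        (Fintype.card A : ℝ) =
      (∑ t : A, gowersNorm k (fun x => f x * (starRingEnd ℂ) (f₂ (x + t))) ^ (2 ^ k)) /
        (Fintype.card A : ℝ) := by
  have hconv : conv k (fun S x => conjIter S.card (σ f x))
      = conv k (fun S x => conjIter S.card (f x)) := by
    have h := hσ.2.2.2 fun S x => conjIter S.card (f x)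
    simp_rw [map_conjIter σ hσ.2.1] at h
    exact h
  have key : ∑ t : A, gowersInner k (fun _ x => σ f x * (starRingEnd ℂ) (f₂ (x + t)))
      = ∑ t : A, gowersInner k (fun _ x => f x * (starRingEnd ℂ) (f₂ (x + t))) := by
    rw [sum_gowersInner_shift k (σ f) fun x => (starRingEnd ℂ) (f₂ x),
      sum_gowersInner_shift k f fun x => (starRingEnd ℂ) (f₂ x), hconv]
  simp_rw [gowersNorm_pow, ← Complex.re_sum]
  rw [key]

end Stmt8
end

section
/- Let A be a finite abelian group, let N be a group, let Z be a central subgroup of N isomorphic (via a fixed isomorphism e : 𝒞 → Z) to the circle group 𝒞, and suppose the quotient N/Z is finite. Let d denote the shift-invariant metric on N with d(x, y) equal to the normalized arc distance between e^{-1}(x y^{-1}) and 1 when x y^{-1} ∈ Z, and d(x, y) = ∞ otherwise. Let h : A → N be a map such that a ↦ h(a)Z is a homomorphism from A to N/Z and d(h(a+b), h(a)h(b)) ≤ ε for all a, b ∈ A, where ε ≤ 1/40. Then there exists a homomorphism g : A → N such that g(a)Z = h(a)Z and d(g(a), h(a)) ≤ 4ε for every a ∈ A. -/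
/-!
Write `h (a + b) = e (exp (i t a b)) * h a * h b` with angles `|t a b| ≤ 2πε`. Associativity of
addition in `A` and of multiplication in `N` makes `exp (i t)` a 2-cocycle, so the coboundary of
`t` takes values in `2πℤ`. It is a signed sum of four angles of size at most `2π/40`, hence it
vanishes and `t` is a *real-valued* 2-cocycle. Over the finite group `A` such a cocycle is the
coboundary of its average `s a = |A|⁻¹ ∑ x, t a x`, so `g a = e (exp (i s a)) * h a` is a
homomorphism; as `|s a| ≤ 2πε`, it even lies within `ε` of `h`.
-/

namespace Stmt13

/-- Normalized arc distance on the circle group: the length of the shorter arc connecting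
two points, divided by `2π`. -/
noncomputable def arcDist (z w : Circle) : ℝ :=
  |Complex.arg ((z * w⁻¹ : Circle) : ℂ)| / (2 * Real.pi)

/-- The shift-invariant metric on a group `N` with central subgroup `Z ≅ 𝒞` (via `e`):
the normalized arc distance of `x y⁻¹` when `x y⁻¹ ∈ Z`, and `∞` otherwise. -/
noncomputable def circleDist {N : Type*} [Group N] (Z : Subgroup N) (e : Circle ≃* Z)
    (x y : N) : ENNReal :=
  open scoped Classical in
  if h : x * y⁻¹ ∈ Z then ENNReal.ofReal (arcDist (e.symm ⟨x * y⁻¹, h⟩) 1) else ⊤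

/-- Points at distance at most `ε` differ by the central element of an angle of size at most
`2πε`. The `max` accounts for `ENNReal.ofReal` truncating negative `ε` to `0`. -/
lemma exists_angle_of_circleDist_le {N : Type*} [Group N] {Z : Subgroup N} {e : Circle ≃* Z}
    {x y : N} {ε : ℝ} (hxy : circleDist Z e x y ≤ ENNReal.ofReal ε) :
    ∃ θ : ℝ, |θ| ≤ max ε 0 * (2 * Real.pi) ∧ x = e (Circle.exp θ) * y := by
  unfold circleDist at hxy
  split_ifs at hxy with hm
  · refine ⟨Complex.arg (e.symm ⟨x * y⁻¹, hm⟩ : Circle), ?_, ?_⟩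
    · have hle : arcDist (e.symm ⟨x * y⁻¹, hm⟩) 1 ≤ max ε 0 := by
        rw [← ENNReal.ofReal_le_ofReal_iff (le_max_right _ _)]
        exact hxy.trans (ENNReal.ofReal_le_ofReal (le_max_left _ _))
      rw [arcDist, div_le_iff₀ Real.two_pi_pos] at hle
      simpa using hle
    · simp [Circle.exp_arg]
  · simp at hxy

lemma circleDist_exp_mul_le {N : Type*} [Group N] (Z : Subgroup N) (e : Circle ≃* Z)
    (y : N) {θ δ : ℝ} (hπ : |θ| < Real.pi) (hθ : |θ| ≤ δ * (2 * Real.pi)) :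
    circleDist Z e (e (Circle.exp θ) * y) y ≤ ENNReal.ofReal δ := by
  have hm : (e (Circle.exp θ) : N) * y * y⁻¹ ∈ Z := by simp
  have hz : e.symm ⟨(e (Circle.exp θ) : N) * y * y⁻¹, hm⟩ = Circle.exp θ := by
    rw [MulEquiv.symm_apply_eq]
    ext
    simp
  unfold circleDist
  rw [dif_pos hm, hz]
  apply ENNReal.ofReal_le_ofReal
  rw [arcDist, div_le_iff₀ Real.two_pi_pos, inv_one, mul_one,
    Circle.arg_exp (abs_lt.1 hπ).1 (abs_lt.1 hπ).2.le]
  exact hθ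

/-- The exponential map has no nontrivial kernel among small angles. -/
lemma eq_zero_of_exp_eq_one {θ : ℝ} (h1 : Circle.exp θ = 1) (hθ : |θ| < 2 * Real.pi) :
    θ = 0 := by
  rw [← Circle.exp_zero, Circle.exp_eq_exp] at h1
  obtain ⟨m, hm⟩ := h1
  rw [zero_add] at hm
  have hm1 : |(m : ℝ)| < 1 := by
    rw [hm, abs_mul, abs_of_pos Real.two_pi_pos] at hθ
    nlinarith [Real.two_pi_pos]
  have hm0 : m = 0 := Int.abs_lt_one_iff.1 (by exact_mod_cast hm1)
  simp [hm, hm0]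

/-- A real 2-cocycle on a finite group is the coboundary of its average in the second variable. -/
lemma cocycle_eq_coboundary_average {A : Type*} [AddCommGroup A] [Fintype A] (t : A → A → ℝ)
    (ht : ∀ a b c, t (a + b) c + t a b = t a (b + c) + t b c) (a b : A) :
    (∑ x, t (a + b) x) / Fintype.card A + t a b =
      (∑ x, t a x) / Fintype.card A + (∑ x, t b x) / Fintype.card A := by
  have hsum := Finset.sum_congr (rfl : (Finset.univ : Finset A) = _) fun x _ => ht a b x
  simp only [Finset.sum_add_distrib, Finset.sum_const, Finset.card_univ, nsmul_eq_mul] at hsum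
  have hshift : ∑ x, t a (b + x) = ∑ x, t a x := Equiv.sum_comp (Equiv.addLeft b) (t a)
  rw [hshift] at hsum
  have hA : (Fintype.card A : ℝ) ≠ 0 := by exact_mod_cast Fintype.card_ne_zero
  field_simp
  linarith

/-- a map `h` from a finite abelian group `A` into a central extension `N` of
the circle group with finite quotient, which is a homomorphism modulo `Z` and a homomorphism
up to error `ε ≤ 1/40`, lies within `4ε` of a genuine homomorphism `g : A → N` with the same
projection modulo `Z`. -/
theorem almost_homomorphism {A N : Type*} [AddCommGroup A] [Fintype A] [Group N]
    (Z : Subgroup N) [Z.Normal] (hZ : Z ≤ Subgroup.center N) (e : Circle ≃* Z)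
    [Finite (N ⧸ Z)]
    (h : A → N)
    (hproj : ∀ a b : A, (QuotientGroup.mk (h (a + b)) : N ⧸ Z) =
      QuotientGroup.mk (h a) * QuotientGroup.mk (h b))
    (ε : ℝ) (hε : ε ≤ 1 / 40)
    (happrox : ∀ a b : A, circleDist Z e (h (a + b)) (h a * h b) ≤ ENNReal.ofReal ε) :
    ∃ g : A → N,
      (∀ a b : A, g (a + b) = g a * g b) ∧
      (∀ a : A, (QuotientGroup.mk (g a) : N ⧸ Z) = QuotientGroup.mk (h a)) ∧
      (∀ a : A, circleDist Z e (g a) (h a) ≤ ENNReal.ofReal (4 * ε)) := by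
  choose t ht_le ht using fun a b => exists_angle_of_circleDist_le (happrox a b)
  have hδ : max ε 0 ≤ 1 / 40 := max_le hε (by norm_num)
  have hπ := Real.pi_pos
  have ht_small (a b : A) : |t a b| ≤ Real.pi / 20 := by
    nlinarith [ht_le a b]
  have hcomm (z : Circle) (n : N) : n * e z = e z * n :=
    Subgroup.mem_center_iff.1 (hZ (e z).2) n
  have hexp (x y : ℝ) : (e (Circle.exp (x + y)) : N) = e (Circle.exp x) * e (Circle.exp y) := by
    rw [Circle.exp_add, map_mul, Subgroup.coe_mul]
  have hcocycle (a b c : A) : t (a + b) c + t a b = t a (b + c) + t b c := by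
    -- the two ways of expanding `h (a + b + c)`
    have hassoc : (e (Circle.exp (t (a + b) c + t a b)) : N) =
        e (Circle.exp (t a (b + c) + t b c)) := by
      apply mul_right_cancel (b := h a * h b * h c)
      calc (e (Circle.exp (t (a + b) c + t a b)) : N) * (h a * h b * h c)
          = h (a + b + c) := by rw [ht (a + b) c, ht a b, hexp]; simp only [mul_assoc]
        _ = h (a + (b + c)) := by rw [add_assoc]
        _ = e (Circle.exp (t a (b + c) + t b c)) * (h a * h b * h c) := by
          rw [ht a (b + c), ht b c, hexp, ← mul_assoc (h a), hcomm]
          simp only [mul_assoc]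
    have hexp_eq := e.injective (Subtype.ext hassoc)
    rw [← sub_eq_zero]
    apply eq_zero_of_exp_eq_one
    · rw [Circle.exp_sub, hexp_eq, div_self']
    · have h1 := abs_le.1 (ht_small (a + b) c)
      have h2 := abs_le.1 (ht_small a b)
      have h3 := abs_le.1 (ht_small a (b + c))
      have h4 := abs_le.1 (ht_small b c)
      rw [abs_lt]
      constructor <;> linarith
  set s : A → ℝ := fun a => (∑ x, t a x) / Fintype.card A with hs
  have hs_add (a b : A) : s (a + b) + t a b = s a + s b :=
    cocycle_eq_coboundary_average t hcocycle a b
  have hs_le (a : A) : |s a| ≤ max ε 0 * (2 * Real.pi) := by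
    have hA : (0 : ℝ) < Fintype.card A := by exact_mod_cast Fintype.card_pos
    rw [hs, abs_div, abs_of_pos hA, div_le_iff₀ hA]
    refine (Finset.abs_sum_le_sum_abs _ _).trans ((Finset.sum_le_sum fun x _ => ht_le a x).trans ?_)
    simp [mul_comm]
  refine ⟨fun a => e (Circle.exp (s a)) * h a, fun a b => ?_, fun a => ?_, fun a => ?_⟩
  · calc (e (Circle.exp (s (a + b))) : N) * h (a + b)
        = e (Circle.exp (s (a + b) + t a b)) * (h a * h b) := by rw [ht a b, hexp, mul_assoc]
      _ = e (Circle.exp (s a)) * h a * (e (Circle.exp (s b)) * h b) := by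
        rw [hs_add, hexp, mul_assoc, mul_assoc, ← mul_assoc (h a), hcomm, mul_assoc]
  · beta_reduce
    rw [← hcomm, QuotientGroup.mk_mul_of_mem _ (e _).2]
  · refine (circleDist_exp_mul_le Z e (h a) (δ := max ε 0) ?_ (hs_le a)).trans ?_
    · nlinarith [hs_le a]
    · rcases le_total ε 0 with h0 | h0
      · simp [max_eq_right h0]
      · rw [max_eq_left h0]
        exact ENNReal.ofReal_le_ofReal (by linarith)

end Stmt13
end

section
/- Let G = (ℝ/ℤ)^n × F where F is a finite abelian group, equipped with the translation-invariant metric d((u,s),(v,t)) = max_i d₀(u_i, v_i) if s = t and d((u,s),(v,t)) = ∞ if s ≠ t, where d₀ is the standard quotient metric on ℝ/ℤ. For every ε > 0 there exists δ > 0 (depending only on G and ε) such that the following holds: for every finite abelian group A and every δ-linear map f : A → G, there exist a group homomorphism φ : A → G and a constant c ∈ G with d(f(a), c + φ(a)) ≤ ε for every a ∈ A. -/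
/-!
The `F`-coordinate of a `δ`-linear map satisfies `f (a + b) - f b = c a` exactly, so `c` is
already a homomorphism there. On a circle coordinate, write `f (a + b) - f b = c a + t a b`
with `t a b` a real number of absolute value at most `δ`. Comparing the two ways of computing
`f (a + a' + b) - f b` shows that `t a (a' + b) + t a' b - t (a + a') b` is a lift of
`c (a + a') - c a - c a'`, which does not depend on `b`; being a real number of absolute value
less than `1/2`, the lift itself does not depend on `b`. Averaging over `b` then shows that
`a ↦ c a + 𝔼 b, t a b` is a homomorphism (`circle_correction`).
-/

namespace Stmt14

/-- The translation-invariant metric on `G = (ℝ/ℤ)ⁿ × F`: the maximum of the standard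
quotient metrics on the circle coordinates when the `F`-coordinates agree, and `∞`
otherwise. -/
noncomputable def gDist {n : ℕ} {F : Type*} [DecidableEq F]
    (p q : (Fin n → AddCircle (1 : ℝ)) × F) : ENNReal :=
  if p.2 = q.2 then ⨆ i : Fin n, ENNReal.ofReal (dist (p.1 i) (q.1 i)) else ⊤

/-- `f : A → G` is `δ`-linear: for every `a` there is `c_a ∈ G` with
`d(f(a+b) − f(b), c_a) ≤ δ` for every `b`. -/
def IsDeltaLinear {n : ℕ} {F : Type*} [DecidableEq F] [AddCommGroup F]
    {A : Type*} [AddCommGroup A]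
    (f : A → (Fin n → AddCircle (1 : ℝ)) × F) (δ : ℝ) : Prop :=
  ∀ a : A, ∃ c : (Fin n → AddCircle (1 : ℝ)) × F,
    ∀ b : A, gDist (f (a + b) - f b) c ≤ ENNReal.ofReal δ

theorem exists_lift_abs_eq_norm (x : AddCircle (1 : ℝ)) :
    ∃ r : ℝ, (r : AddCircle (1 : ℝ)) = x ∧ |r| = ‖x‖ := by
  obtain ⟨y, rfl⟩ := QuotientAddGroup.mk_surjective x
  refine ⟨y - round y, ?_, ?_⟩
  · rw [AddCircle.coe_sub]
    have h : ((round y : ℝ) : AddCircle (1 : ℝ)) = 0 :=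
      AddCircle.coe_eq_zero_iff (1 : ℝ) |>.2 ⟨round y, by simp⟩
    rw [h, sub_zero]
  · exact (UnitAddCircle.norm_eq (x := y)).symm

/-- Small real lifts of a point of the circle are unique. -/
theorem eq_of_coe_eq_of_abs_lt {x y : ℝ}
    (h : (x : AddCircle (1 : ℝ)) = (y : AddCircle (1 : ℝ))) (hx : |x| < 1 / 2)
    (hy : |y| < 1 / 2) : x = y := by
  have h' : ((x - y : ℝ) : AddCircle (1 : ℝ)) = 0 := by rw [AddCircle.coe_sub, h, sub_self]
  obtain ⟨m, hm⟩ := (AddCircle.coe_eq_zero_iff (1 : ℝ)).1 h'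
  have hm' : (m : ℝ) = x - y := by simpa using hm
  have hlt : |(m : ℝ)| < 1 := by
    rw [hm']
    rw [abs_lt] at *
    constructor <;> linarith [hx.1, hx.2, hy.1, hy.2]
  have h0 : m = 0 := Int.abs_lt_one_iff.1 (by exact_mod_cast hlt)
  rw [h0] at hm'
  push_cast at hm'
  linarith

/-- The case of a single circle coordinate: averaging the small real lifts of the error
terms turns the approximate increments `c` into a homomorphism. -/
theorem circle_correction {A : Type*} [AddCommGroup A] [Fintype A]
    (f c : A → AddCircle (1 : ℝ)) {δ : ℝ} (hδ : δ ≤ 1 / 8)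
    (h : ∀ a b, ‖f (a + b) - f b - c a‖ ≤ δ) :
    ∃ φ : A →+ AddCircle (1 : ℝ), ∀ a, ‖f a - (f 0 + φ a)‖ ≤ 2 * δ := by
  choose t ht htn using fun a b => exists_lift_abs_eq_norm (f (a + b) - f b - c a)
  have htδ : ∀ a b, |t a b| ≤ δ := fun a b => (htn a b).trans_le (h a b)
  have hN : (0 : ℝ) < Fintype.card A := by exact_mod_cast Fintype.card_pos
  set k : A → ℝ := fun a => (∑ b, t a b) / Fintype.card A with hk
  have hkδ : ∀ a, |k a| ≤ δ := by
    intro a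
    rw [hk, abs_div, abs_of_pos hN, div_le_iff₀ hN]
    calc |∑ b, t a b| ≤ ∑ b, |t a b| := Finset.abs_sum_le_sum_abs _ _
      _ ≤ ∑ _b : A, δ := Finset.sum_le_sum fun b _ => htδ a b
      _ = δ * Fintype.card A := by simp [mul_comm]
  have hlift : ∀ a a' b, ((t a (a' + b) + t a' b - t (a + a') b : ℝ) : AddCircle (1 : ℝ))
      = c (a + a') - c a - c a' := by
    intro a a' b
    rw [AddCircle.coe_sub, AddCircle.coe_add, ht, ht, ht, add_assoc a a' b]
    abel
  have hsmall : ∀ a a' b, |t a (a' + b) + t a' b - t (a + a') b| < 1 / 2 := by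
    intro a a' b
    have h1 := abs_le.1 (htδ a (a' + b))
    have h2 := abs_le.1 (htδ a' b)
    have h3 := abs_le.1 (htδ (a + a') b)
    rw [abs_lt]
    constructor <;> linarith [h1.1, h1.2, h2.1, h2.2, h3.1, h3.2]
  have hconst : ∀ a a' b, t a (a' + b) + t a' b - t (a + a') b
      = t a (a' + 0) + t a' 0 - t (a + a') 0 := fun a a' b =>
    eq_of_coe_eq_of_abs_lt ((hlift a a' b).trans (hlift a a' 0).symm)
      (hsmall a a' b) (hsmall a a' 0)
  have hkadd : ∀ a a', k a + k a' - k (a + a')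
      = t a (a' + 0) + t a' 0 - t (a + a') 0 := by
    intro a a'
    have hs := Finset.sum_congr (rfl : (Finset.univ : Finset A) = Finset.univ)
      fun b _ => hconst a a' b
    rw [Finset.sum_sub_distrib, Finset.sum_add_distrib,
      Fintype.sum_equiv (Equiv.addLeft a') (fun b => t a (a' + b)) (t a) (fun _ => rfl),
      Finset.sum_const, Finset.card_univ, nsmul_eq_mul] at hs
    simp only [hk]
    rw [← add_div, ← sub_div, div_eq_iff hN.ne', hs, mul_comm]
  refine ⟨AddMonoidHom.mk' (fun a => c a + (k a : AddCircle (1 : ℝ))) ?_, ?_⟩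
  · intro a a'
    have h1 : (k a : AddCircle (1 : ℝ)) + k a' - k (a + a') = c (a + a') - c a - c a' := by
      rw [← AddCircle.coe_add, ← AddCircle.coe_sub, hkadd, hlift]
    rw [← sub_eq_zero] at h1 ⊢
    rw [← neg_eq_zero, ← h1]
    abel
  · intro a
    have h1 : f a - (f 0 + (c a + (k a : AddCircle (1 : ℝ))))
        = (f (a + 0) - f 0 - c a) - (k a : AddCircle (1 : ℝ)) := by
      rw [add_zero]; abel
    have h2 : ‖(k a : AddCircle (1 : ℝ))‖ ≤ |k a| := by
      rw [UnitAddCircle.norm_eq]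
      simpa using round_le (k a) 0
    calc ‖f a - (f 0 + (c a + (k a : AddCircle (1 : ℝ))))‖
        ≤ ‖f (a + 0) - f 0 - c a‖ + ‖(k a : AddCircle (1 : ℝ))‖ := by
          rw [h1]; exact norm_sub_le _ _
      _ ≤ 2 * δ := by linarith [h a 0, hkδ a]

theorem gDist_le_iff {n : ℕ} {F : Type*} [DecidableEq F]
    (p q : (Fin n → AddCircle (1 : ℝ)) × F) {δ : ℝ} (hδ : 0 ≤ δ) :
    gDist p q ≤ ENNReal.ofReal δ ↔ p.2 = q.2 ∧ ∀ i, ‖p.1 i - q.1 i‖ ≤ δ := by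
  unfold gDist
  split_ifs with h
  · simp only [iSup_le_iff, ENNReal.ofReal_le_ofReal_iff hδ, dist_eq_norm, h, true_and]
  · simp [h]

/-- for every `ε > 0` there is `δ > 0`, depending only on
`G = (ℝ/ℤ)ⁿ × F` and `ε`, such that every `δ`-linear map from a finite abelian group `A`
into `G` is within `ε` of the sum of a constant and a genuine homomorphism. -/
theorem almost_linear_correction (n : ℕ) (F : Type*) [DecidableEq F] [AddCommGroup F]
    [Fintype F] (ε : ℝ) (hε : 0 < ε) :
    ∃ δ : ℝ, 0 < δ ∧
      ∀ (A : Type) (_ : AddCommGroup A) (_ : Fintype A)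
        (f : A → (Fin n → AddCircle (1 : ℝ)) × F),
        IsDeltaLinear f δ →
        ∃ (φ : A →+ (Fin n → AddCircle (1 : ℝ)) × F)
          (c : (Fin n → AddCircle (1 : ℝ)) × F),
          ∀ a : A, gDist (f a) (c + φ a) ≤ ENNReal.ofReal ε := by
  have hδ0 : (0 : ℝ) < min (ε / 2) (1 / 8) := by positivity
  refine ⟨min (ε / 2) (1 / 8), hδ0, fun A _ _ f hf => ?_⟩
  choose c hc using hf
  simp only [gDist_le_iff _ _ hδ0.le] at hc
  choose φ hφ using fun i : Fin n =>
    circle_correction (fun a => (f a).1 i) (fun a => (c a).1 i) (min_le_right (ε / 2) (1 / 8))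
      (fun a b => (hc a b).2 i)
  have hF : ∀ a b, (f (a + b)).2 = (c a).2 + (f b).2 := fun a b =>
    sub_eq_iff_eq_add.1 (hc a b).1
  have hψ : ∀ a b, (c (a + b)).2 = (c a).2 + (c b).2 := by
    intro a b
    have h1 := hF (a + b) 0
    rw [add_assoc, hF, hF, ← add_assoc] at h1
    exact (add_right_cancel h1).symm
  refine ⟨(AddMonoidHom.pi φ).prod (AddMonoidHom.mk' (fun a => (c a).2) hψ), f 0, fun a => ?_⟩
  rw [gDist_le_iff _ _ hε.le]
  refine ⟨?_, fun i => (hφ i a).trans ?_⟩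
  · have h1 := hF a 0
    rw [add_zero, add_comm] at h1
    exact h1
  · linarith [min_le_left (ε / 2) (1 / 8)]

end Stmt14
end
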